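/- arXiv:math/9906016 — 3 statements merged into one kernel-verified Lean document; each statement's English description precedes it below -/
import Mathlib

section
/- Let (α,β) ∈ △ have triangle sequence (a_1, a_2, …) with associated numbers d_k, and suppose the sequence has not terminated through index k+1 (so d_{k-2}, d_{k-1}, d_k, d_{k+1} are all defined with d_{k-2}, d_{k-1}, d_k > 0). Then T(d_{k-1}/d_{k-2}, d_k/d_{k-2}) = (d_k/d_{k-1}, d_{k+1}/d_{k-1}). -/
/-- The triangle △ = {(x,y) : 1 ≥ x ≥ y > 0}. -/
def Tri : Set (ℝ × ℝ) := {p | p.1 ≤ 1 ∧ p.2 ≤ p.1 ∧ 0 < p.2}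

/-- The subtriangle △ₖ = {(x,y) ∈ △ : 1 - x - ky ≥ 0 > 1 - x - (k+1)y}. -/
def TriK (k : ℕ) : Set (ℝ × ℝ) :=
  {p | p ∈ Tri ∧ 0 ≤ 1 - p.1 - (k : ℝ) * p.2 ∧ 1 - p.1 - ((k : ℝ) + 1) * p.2 < 0}

/-- The triangle map T, on the piece △ₖ : T(α,β) = (β/α, (1-α-kβ)/α). -/
noncomputable def TmapK (k : ℕ) (p : ℝ × ℝ) : ℝ × ℝ :=
  (p.2 / p.1, (1 - p.1 - (k : ℝ) * p.2) / p.1)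

/-- The sequence of numbers d₋₂ = 1, d₋₁ = α, d₀ = β,
    d_k = d_{k-3} - d_{k-2} - a_k·d_{k-1}, shifted so that `triD α β n` is d_{n-2};
    here a_k is the nonnegative integer with
    d_{k-3} - d_{k-2} - a_k·d_{k-1} ≥ 0 > d_{k-3} - d_{k-2} - (a_k+1)·d_{k-1}
    (i.e. the floor of (d_{k-3} - d_{k-2})/d_{k-1}).  If some d_k = 0 the
    sequence (has terminated and) is continued by 0's. -/
noncomputable def triD (α β : ℝ) : ℕ → ℝ
  | 0 => 1
  | 1 => α
  | 2 => β
  | (k+3) =>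
    if 0 < triD α β (k+2) then
      triD α β k - triD α β (k+1) -
        ((⌊(triD α β k - triD α β (k+1)) / triD α β (k+2)⌋).toNat : ℝ) * triD α β (k+2)
    else 0

/-- The triangle sequence of (α,β): `triA α β n` is the term a_{n+1}, so that the
    triangle sequence (a₁, a₂, …) is (triA α β 0, triA α β 1, …). -/
noncomputable def triA (α β : ℝ) (k : ℕ) : ℕ :=
  (⌊(triD α β k - triD α β (k+1)) / triD α β (k+2)⌋).toNat

/-! The pieces `TriK n` and the branches of `T` are conditions and maps on the ratios `(b/a, c/a)`.
Clearing the denominator `a`, one application of `T` is the subtractive step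
`(a, b, c) ↦ (b, c, a - b - n * c)`, which is exactly the recursion defining the `d_k`; the ratios
of consecutive `d_k` stay in the triangle because the `d_k` are nonincreasing, each remainder being
smaller than its divisor. -/

theorem one_sub_div_sub_mul_div {K : Type*} [Field K] {a : K} (ha : a ≠ 0) (b c t : K) :
    1 - b / a - t * (c / a) = (a - b - t * c) / a := by
  field_simp

theorem div_mem_tri_iff {a b c : ℝ} (ha : 0 < a) :
    (b / a, c / a) ∈ Tri ↔ b ≤ a ∧ c ≤ b ∧ 0 < c := by
  simp only [Tri, Set.mem_ofPred_eq, div_le_one ha, div_le_div_iff_of_pos_right ha,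
    div_pos_iff_of_pos_right ha]

theorem div_mem_triK_iff {a b c : ℝ} (ha : 0 < a) (n : ℕ) :
    (b / a, c / a) ∈ TriK n ↔
      (b ≤ a ∧ c ≤ b ∧ 0 < c) ∧ 0 ≤ a - b - n * c ∧ a - b - (n + 1) * c < 0 := by
  simp only [TriK, Set.mem_ofPred_eq, div_mem_tri_iff ha, one_sub_div_sub_mul_div ha.ne',
    le_div_iff₀ ha, div_lt_iff₀ ha, zero_mul]

theorem tmapK_div {a : ℝ} (ha : a ≠ 0) (b c : ℝ) (n : ℕ) :
    TmapK n (b / a, c / a) = (c / b, (a - b - n * c) / b) := by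
  simp only [TmapK, one_sub_div_sub_mul_div ha, div_div_div_cancel_right₀ ha]

section TriangleSequence

variable {α β : ℝ} {k : ℕ}

theorem triA_eq_natFloor (α β : ℝ) (k : ℕ) :
    triA α β k = ⌊(triD α β k - triD α β (k + 1)) / triD α β (k + 2)⌋₊ :=
  Int.floor_toNat _

theorem triD_sub_triA_mul_nonneg (hle : triD α β (k + 1) ≤ triD α β k)
    (hpos : 0 < triD α β (k + 2)) :
    0 ≤ triD α β k - triD α β (k + 1) - triA α β k * triD α β (k + 2) := by
  rw [triA_eq_natFloor, sub_nonneg, ← le_div_iff₀ hpos]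
  exact Nat.floor_le (div_nonneg (sub_nonneg.mpr hle) hpos.le)

theorem triD_sub_triA_add_one_mul_neg (hpos : 0 < triD α β (k + 2)) :
    triD α β k - triD α β (k + 1) - (triA α β k + 1) * triD α β (k + 2) < 0 := by
  rw [triA_eq_natFloor, sub_neg, ← div_lt_iff₀ hpos]
  exact Nat.lt_floor_add_one _

theorem triD_add_three_of_pos (hpos : 0 < triD α β (k + 2)) :
    triD α β (k + 3) =
      triD α β k - triD α β (k + 1) - triA α β k * triD α β (k + 2) := by
  rw [triD, if_pos hpos, triA]

theorem triD_add_three_of_nonpos (hnonpos : triD α β (k + 2) ≤ 0) : triD α β (k + 3) = 0 := by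
  rw [triD, if_neg hnonpos.not_gt]

theorem triD_add_three_nonneg (hle : triD α β (k + 1) ≤ triD α β k) :
    0 ≤ triD α β (k + 3) := by
  rcases le_or_gt (triD α β (k + 2)) 0 with hnonpos | hpos
  · exact (triD_add_three_of_nonpos hnonpos).ge
  · exact triD_add_three_of_pos hpos ▸ triD_sub_triA_mul_nonneg hle hpos

theorem triD_add_three_le (hnonneg : 0 ≤ triD α β (k + 2)) :
    triD α β (k + 3) ≤ triD α β (k + 2) := by
  rcases hnonneg.eq_or_lt with hzero | hpos
  · exact (triD_add_three_of_nonpos hzero.ge).trans_le hnonneg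
  · linarith [triD_add_three_of_pos hpos, triD_sub_triA_add_one_mul_neg hpos]

theorem triD_antitone (hα : α ≤ 1) (hβα : β ≤ α) (hβ : 0 ≤ β) : Antitone (triD α β) := by
  have consecutive (n : ℕ) : triD α β (n + 1) ≤ triD α β n ∧
      triD α β (n + 2) ≤ triD α β (n + 1) ∧ 0 ≤ triD α β (n + 2) := by
    induction n with
    | zero => simpa only [triD] using And.intro hα ⟨hβα, hβ⟩
    | succ n ih =>
      obtain ⟨hle, hle', hnonneg⟩ := ih
      exact ⟨hle', triD_add_three_le hnonneg, triD_add_three_nonneg hle⟩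
  exact antitone_nat_of_succ_le fun n => (consecutive n).1

end TriangleSequence

/-- If the triangle sequence of (α,β) ∈ △ has not terminated through index k+1
(d_{k-2}, d_{k-1}, d_k > 0, with d_{k-2} = triD α β k etc.), then
T(d_{k-1}/d_{k-2}, d_k/d_{k-2}) = (d_k/d_{k-1}, d_{k+1}/d_{k-1}); here the point
(d_{k-1}/d_{k-2}, d_k/d_{k-2}) lies in the piece △_{a_{k+1}} of the domain of T. -/
theorem stmt_2 (α β : ℝ) (hmem : (α, β) ∈ Tri) (k : ℕ)
    (hpos : ∀ j, j ≤ k + 2 → 0 < triD α β j) :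
    (triD α β (k+1) / triD α β k, triD α β (k+2) / triD α β k) ∈ TriK (triA α β k) ∧
    TmapK (triA α β k) (triD α β (k+1) / triD α β k, triD α β (k+2) / triD α β k)
      = (triD α β (k+2) / triD α β (k+1), triD α β (k+3) / triD α β (k+1)) := by
  have anti : Antitone (triD α β) := triD_antitone hmem.1 hmem.2.1 hmem.2.2.le
  have le₁ : triD α β (k + 1) ≤ triD α β k := anti (by lia)
  have le₂ : triD α β (k + 2) ≤ triD α β (k + 1) := anti (by lia)
  have pos₀ : 0 < triD α β k := hpos k (by lia)
  have pos₂ : 0 < triD α β (k + 2) := hpos (k + 2) le_rfl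
  constructor
  · exact (div_mem_triK_iff pos₀ _).mpr ⟨⟨le₁, le₂, pos₂⟩,
      triD_sub_triA_mul_nonneg le₁ pos₂, triD_sub_triA_add_one_mul_neg pos₂⟩
  · rw [tmapK_div pos₀.ne', triD_add_three_of_pos pos₂]
end

section
/- For every nonnegative integer k, the polynomial x³ + k·x² + x - 1 has a real root α with 0 < α < 1, and for any such root the pair (α, α²) lies in △_k and satisfies T(α, α²) = (α, α²); consequently the triangle sequence of (α, α²) is the purely periodic sequence (k, k, k, …). -/
/-!
The triangle map acts on triangle sequences as the shift: the numbers `d_k` satisfy a homogeneous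
recursion, and those of `T(α, β)` are those of `(α, β)` moved by one index and divided by `α`.
So a fixed point of `T` in `△ₖ` has `d_{n-2} = αⁿ` and triangle sequence `(k, k, k, …)`. The fixed
points with `α ≠ 0` are the pairs `(α, α²)` with `α` a root of the cubic, and a positive root
satisfies `1 - α - k α² = α³`, which puts `(α, α²)` in `△ₖ` because `0 < α³ < α²`.
-/

section Shift

lemma triD_add_three (α β : ℝ) (n : ℕ) :
    triD α β (n + 3) =
      if 0 < triD α β (n + 2) then
        triD α β n - triD α β (n + 1) - triA α β n * triD α β (n + 2)
      else 0 := by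
  rw [triD, triA]

variable {k : ℕ} {α β : ℝ}

lemma fst_pos_of_mem_triK (h : (α, β) ∈ TriK k) : 0 < α :=
  h.1.2.2.trans_le h.1.2.1

lemma triA_zero_of_mem_triK (h : (α, β) ∈ TriK k) : triA α β 0 = k := by
  obtain ⟨⟨-, -, hβ : 0 < β⟩, hlower : 0 ≤ 1 - α - k * β, hupper : 1 - α - (k + 1) * β < 0⟩ := h
  have hfloor : ⌊(1 - α) / β⌋ = (k : ℤ) := by
    rw [Int.floor_eq_iff, Int.cast_natCast, le_div_iff₀ hβ, div_lt_iff₀ hβ]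
    constructor <;> linarith
  simp only [triA, triD, hfloor, Int.toNat_natCast]

lemma triD_succ_of_mem_triK (h : (α, β) ∈ TriK k) (n : ℕ) :
    triD α β (n + 1) = α * triD (TmapK k (α, β)).1 (TmapK k (α, β)).2 n := by
  have hα : 0 < α := fst_pos_of_mem_triK h
  induction n using Nat.strong_induction_on with
  | _ n ih =>
    match n with
    | 0 => simp only [triD, mul_one]
    | 1 => simp only [triD, TmapK, mul_div_cancel₀ _ hα.ne']
    | 2 =>
      have hfirst : (⌊(1 - α) / β⌋).toNat = k := triA_zero_of_mem_triK h
      have hβ : 0 < β := h.1.2.2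
      simp only [triD, TmapK, hβ, if_true, hfirst, mul_div_cancel₀ _ hα.ne']
    | m + 3 =>
      have hquot : triA α β (m + 1) = triA (TmapK k (α, β)).1 (TmapK k (α, β)).2 m := by
        simp only [triA, ih m (by lia), ih (m + 1) (by lia), ih (m + 2) (by lia), ← mul_sub,
          mul_div_mul_left _ _ hα.ne']
      rw [triD_add_three _ _ m, triD_add_three α β (m + 1), hquot, ih m (by lia),
        ih (m + 1) (by lia), ih (m + 2) (by lia)]
      simp only [mul_pos_iff_of_pos_left hα, mul_ite, mul_zero]
      congr 1
      ring

lemma triA_succ_of_mem_triK (h : (α, β) ∈ TriK k) (n : ℕ) :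
    triA α β (n + 1) = triA (TmapK k (α, β)).1 (TmapK k (α, β)).2 n := by
  simp only [triA, triD_succ_of_mem_triK h, ← mul_sub,
    mul_div_mul_left _ _ (fst_pos_of_mem_triK h).ne']

lemma triD_eq_pow_of_tmapK_eq_self (h : (α, β) ∈ TriK k) (hT : TmapK k (α, β) = (α, β)) (n : ℕ) :
    triD α β n = α ^ n := by
  induction n with
  | zero => rw [triD, pow_zero]
  | succ n ih => rw [triD_succ_of_mem_triK h, hT, ih, pow_succ']

lemma triA_eq_of_tmapK_eq_self (h : (α, β) ∈ TriK k) (hT : TmapK k (α, β) = (α, β)) (n : ℕ) :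
    triA α β n = k := by
  induction n with
  | zero => exact triA_zero_of_mem_triK h
  | succ n ih => rw [triA_succ_of_mem_triK h, hT, ih]

end Shift

section Cubic

lemma exists_cubic_root_mem_Ioo {c : ℝ} (hc : -1 < c) :
    ∃ x ∈ Set.Ioo (0 : ℝ) 1, x ^ 3 + c * x ^ 2 + x - 1 = 0 := by
  have hcont : ContinuousOn (fun x : ℝ ↦ x ^ 3 + c * x ^ 2 + x - 1) (Set.Icc 0 1) := by
    fun_prop
  exact intermediate_value_Ioo zero_le_one hcont ⟨by norm_num, by linarith⟩

variable {k : ℕ} {α β : ℝ}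

lemma tmapK_eq_self_iff (hα : α ≠ 0) :
    TmapK k (α, β) = (α, β) ↔ β = α ^ 2 ∧ α ^ 3 + (k : ℝ) * α ^ 2 + α - 1 = 0 := by
  rw [TmapK, Prod.mk.injEq, div_eq_iff hα, div_eq_iff hα, ← sq]
  refine and_congr_right fun hβ ↦ ?_
  subst hβ
  constructor <;> intro h <;> linear_combination -h

lemma mem_triK_of_cubic_root (hα : 0 < α) (hroot : α ^ 3 + (k : ℝ) * α ^ 2 + α - 1 = 0) :
    (α, α ^ 2) ∈ TriK k := by
  have hcube : 1 - α - (k : ℝ) * α ^ 2 = α ^ 3 := by linear_combination -hroot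
  have hcube_pos : 0 < α ^ 3 := by positivity
  have hlt : α < 1 := by
    have : 0 ≤ (k : ℝ) * α ^ 2 := by positivity
    linarith
  have hsq_le : α ^ 2 ≤ α := pow_le_of_le_one hα.le hlt.le two_ne_zero
  have hcube_lt : α ^ 3 < α ^ 2 := pow_lt_pow_right_of_lt_one₀ hα hlt (by norm_num)
  refine ⟨⟨hlt.le, hsq_le, by positivity⟩, ?_, ?_⟩ <;> linarith only [hcube, hcube_pos, hcube_lt]

end Cubic

/-- For every nonnegative integer k, the polynomial x³ + kx² + x - 1 has a real root α
with 0 < α < 1, and for any such root the pair (α, α²) lies in △ₖ and is a fixed point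
of T; consequently the triangle sequence of (α, α²) is nonterminating and purely
periodic of the form (k, k, k, …). -/
theorem stmt_13 (k : ℕ) :
    (∃ α : ℝ, 0 < α ∧ α < 1 ∧ α ^ 3 + (k : ℝ) * α ^ 2 + α - 1 = 0) ∧
    ∀ α : ℝ, 0 < α → α < 1 → α ^ 3 + (k : ℝ) * α ^ 2 + α - 1 = 0 →
      (α, α ^ 2) ∈ TriK k ∧
      TmapK k (α, α ^ 2) = (α, α ^ 2) ∧
      (∀ j, 0 < triD α (α ^ 2) j) ∧
      ∀ n, triA α (α ^ 2) n = k := by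
  refine ⟨?_, fun α hα _ hroot ↦ ?_⟩
  · obtain ⟨α, ⟨hα, hα_lt⟩, hroot⟩ :=
      exists_cubic_root_mem_Ioo (neg_one_lt_zero.trans_le k.cast_nonneg)
    exact ⟨α, hα, hα_lt, hroot⟩
  · have hmem : (α, α ^ 2) ∈ TriK k := mem_triK_of_cubic_root hα hroot
    have hfix : TmapK k (α, α ^ 2) = (α, α ^ 2) := (tmapK_eq_self_iff hα.ne').2 ⟨rfl, hroot⟩
    refine ⟨hmem, hfix, fun j ↦ ?_, triA_eq_of_tmapK_eq_self hmem hfix⟩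
    rw [triD_eq_pow_of_tmapK_eq_self hmem hfix]
    exact pow_pos hα j
end

section
/- Let (α,β) ∈ △ have a nonterminating triangle sequence (a_1, a_2, …) that is eventually periodic (i.e., there exist N ≥ 1 and p ≥ 1 with a_{k+p} = a_k for all k ≥ N). Then α and β are each algebraic over ℚ of degree at most three, and moreover α ∈ ℚ(β) or β ∈ ℚ(α). -/
/-!
The numbers `d n` satisfy a linear recurrence whose coefficients are eventually periodic, hence
bounded. By a Harnack-type inequality such a recurrence has only one positive solution up to a
scalar, so past `N` the shift by a period multiplies `d` by some `μ`. Multiplication by `μ` then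
preserves the `ℚ`-span of `d N`, `d (N + 1)`, `d (N + 2)`, so `μ` has degree at most three. For a
`ℚ(μ)`-linear functional `φ : ℝ → ℚ(μ)` with `φ 1 ≠ 0` the sequence `φ (d n)` satisfies the same
recurrence and is bounded by a multiple of `d n`, so it is proportional to `d n`; as `d 0 = 1`, this
gives `d n = φ (d n) / φ 1 ∈ ℚ(μ)`. Finally, no field lies strictly between `ℚ` and `ℚ(μ)`, so `α`
generates `ℚ(μ)` unless it is rational.
-/

open IntermediateField Module Polynomial

lemma finite_range_of_eventually_periodic {X : Type*} {f : ℕ → X} {N p : ℕ} (hp : 1 ≤ p)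
    (hf : ∀ n, N ≤ n → f (n + p) = f n) : (Set.range f).Finite := by
  refine ((Set.finite_Iio (N + p)).image f).subset ?_
  rintro _ ⟨n, rfl⟩
  induction n using Nat.strong_induction_on with
  | _ n ih =>
    rcases lt_or_ge n (N + p) with hn | hn
    · exact ⟨n, hn, rfl⟩
    · rw [← Nat.sub_add_cancel (le_of_add_le_right hn), hf _ (Nat.le_sub_of_add_le hn)]
      exact ih _ (by omega)

/-- The sequence `x` satisfies the recurrence of the triangle algorithm with partial quotients `a`:
the paper's `d_k = d_{k-3} - d_{k-2} - a_k d_{k-1}`, in subtraction-free form and with the index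
of `a` shifted so that it starts at `0`. -/
def IsTriangleSolution {M : Type*} [AddCommMonoid M] (a : ℕ → ℕ) (x : ℕ → M) : Prop :=
  ∀ n, x n = x (n + 1) + a n • x (n + 2) + x (n + 3)

namespace IsTriangleSolution

variable {a : ℕ → ℕ}

lemma map {M M' : Type*} [AddCommMonoid M] [AddCommMonoid M'] {x : ℕ → M}
    (hx : IsTriangleSolution a x) (f : M →+ M') : IsTriangleSolution a fun n => f (x n) := by
  intro n
  simp only [hx n, map_add, map_nsmul]

lemma shift {M : Type*} [AddCommMonoid M] {x : ℕ → M} (hx : IsTriangleSolution a x) (k : ℕ) :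
    IsTriangleSolution (fun n => a (n + k)) fun n => x (n + k) := by
  intro n
  simpa only [Nat.add_right_comm _ k] using hx (n + k)

lemma const_mul {R : Type*} [NonUnitalNonAssocSemiring R] {x : ℕ → R}
    (hx : IsTriangleSolution a x) (c : R) : IsTriangleSolution a fun n => c * x n :=
  hx.map (AddMonoidHom.mulLeft c)

lemma sub {M : Type*} [AddCommGroup M] {x y : ℕ → M} (hx : IsTriangleSolution a x)
    (hy : IsTriangleSolution a y) : IsTriangleSolution a fun n => x n - y n := by
  intro n
  simp only [hx n, hy n, nsmul_sub]
  abel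

lemma mem_of_initial_mem {M : Type*} [AddCommGroup M] {x : ℕ → M} (hx : IsTriangleSolution a x)
    (S : AddSubgroup M) (h₀ : x 0 ∈ S) (h₁ : x 1 ∈ S) (h₂ : x 2 ∈ S) (n : ℕ) : x n ∈ S := by
  suffices x n ∈ S ∧ x (n + 1) ∈ S ∧ x (n + 2) ∈ S from this.1
  induction n with
  | zero => exact ⟨h₀, h₁, h₂⟩
  | succ n ih =>
    obtain ⟨hn, hn₁, hn₂⟩ := ih
    have hn₃ : x (n + 3) = x n - (x (n + 1) + a n • x (n + 2)) :=
      eq_sub_of_add_eq' (hx n).symm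
    exact ⟨hn₁, hn₂, hn₃ ▸ S.sub_mem hn (S.add_mem hn₁ (S.nsmul_mem hn₂ _))⟩

section Order

lemma antitone {M : Type*} [AddCommMonoid M] [PartialOrder M] [IsOrderedAddMonoid M] {x : ℕ → M}
    (hx : IsTriangleSolution a x) (hnonneg : ∀ n, 0 ≤ x n) : Antitone x := by
  refine antitone_nat_of_succ_le fun n => ?_
  rw [hx n, add_assoc]
  exact le_add_of_nonneg_right (add_nonneg (nsmul_nonneg (hnonneg _) _) (hnonneg _))

lemma zero_nonneg_of_nonneg {M : Type*} [AddCommMonoid M] [PartialOrder M] [IsOrderedAddMonoid M]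
    {x : ℕ → M} (hx : IsTriangleSolution a x) {n : ℕ} (h₀ : 0 ≤ x n) (h₁ : 0 ≤ x (n + 1))
    (h₂ : 0 ≤ x (n + 2)) : 0 ≤ x 0 := by
  induction n with
  | zero => exact h₀
  | succ n ih =>
    refine ih ?_ h₀ h₁
    rw [hx n]
    exact add_nonneg (add_nonneg h₀ (nsmul_nonneg h₁ _)) h₂

variable {R : Type*} [CommRing R] [PartialOrder R] [IsOrderedRing R] {A : ℕ} {x y : ℕ → R}

lemma le_mul_succ (hA : ∀ n, a n ≤ A) (hx : IsTriangleSolution a x) (hnonneg : ∀ n, 0 ≤ x n)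
    (n : ℕ) : x n ≤ (A + 2) * x (n + 1) := by
  have hanti := hx.antitone hnonneg
  calc x n = x (n + 1) + a n * x (n + 2) + x (n + 3) := by rw [hx n, nsmul_eq_mul]
    _ ≤ x (n + 1) + A * x (n + 1) + x (n + 1) := by
      gcongr
      · exact hnonneg _
      · exact hA n
      · exact hanti (by omega)
      · exact hanti (by omega)
    _ = (A + 2) * x (n + 1) := by ring

lemma le_sq_mul_add_two (hA : ∀ n, a n ≤ A) (hx : IsTriangleSolution a x) (hnonneg : ∀ n, 0 ≤ x n)
    (n : ℕ) : x n ≤ (A + 2) ^ 2 * x (n + 2) := by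
  have hA₀ : (0 : R) ≤ A + 2 := add_nonneg A.cast_nonneg zero_le_two
  calc x n ≤ (A + 2) * x (n + 1) := hx.le_mul_succ hA hnonneg n
    _ ≤ (A + 2) * ((A + 2) * x (n + 2)) := by
      gcongr
      exact hx.le_mul_succ hA hnonneg (n + 1)
    _ = (A + 2) ^ 2 * x (n + 2) := by ring

theorem harnack (hA : ∀ n, a n ≤ A) (hx : IsTriangleSolution a x) (hy : IsTriangleSolution a y)
    (hx_nonneg : ∀ n, 0 ≤ x n) (hy_nonneg : ∀ n, 0 ≤ y n) (n : ℕ) :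
    y n * x 0 ≤ (A + 2) ^ 2 * x n * y 0 := by
  -- The difference of the two sides, with `0` replaced by `m`, is a solution in `m`; being
  -- nonnegative at `n`, `n + 1`, `n + 2`, it is nonnegative at `0`.
  have hdiff : IsTriangleSolution a fun m => (A + 2) ^ 2 * x n * y m - y n * x m :=
    (hy.const_mul _).sub (hx.const_mul _)
  have hA₀ : (0 : R) ≤ A + 2 := add_nonneg A.cast_nonneg zero_le_two
  have hwindow : ∀ i ≤ 2, 0 ≤ (A + 2) ^ 2 * x n * y (n + i) - y n * x (n + i) := by
    intro i hi
    have hyi : y n ≤ (A + 2) ^ 2 * y (n + i) :=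
      (hy.le_sq_mul_add_two hA hy_nonneg n).trans <| by
        gcongr
        exact hy.antitone hy_nonneg (by omega)
    rw [sub_nonneg]
    calc y n * x (n + i) ≤ (A + 2) ^ 2 * y (n + i) * x n := by
          gcongr
          · exact hx_nonneg _
          · exact (hy_nonneg n).trans hyi
          · exact hx.antitone hx_nonneg (by omega)
      _ = (A + 2) ^ 2 * x n * y (n + i) := by ring
  exact sub_nonneg.1 <| hdiff.zero_nonneg_of_nonneg (hwindow 0 (by omega)) (hwindow 1 (by omega))
    (hwindow 2 le_rfl)

end Order

section Real

variable {A N p : ℕ} {μ : ℝ} {x y : ℕ → ℝ}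

theorem exists_eq_mul_of_bddBelow_div (hA : ∀ n, a n ≤ A) (hx : IsTriangleSolution a x)
    (hy : IsTriangleSolution a y) (hypos : ∀ n, 0 < y n)
    (hbdd : BddBelow (Set.range fun n => x n / y n)) : ∃ t, ∀ n, x n = t * y n := by
  -- Harnack's inequality for `x - t y` would improve the infimum `t` if `x 0 - t y 0 > 0`.
  let t := ⨅ n, x n / y n
  have hz : IsTriangleSolution a fun n => x n - t * y n := hx.sub (hy.const_mul t)
  have hz_nonneg : ∀ n, 0 ≤ x n - t * y n := fun n =>
    sub_nonneg.2 ((le_div_iff₀ (hypos n)).1 (ciInf_le hbdd n))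
  have himprove : t + (x 0 - t * y 0) / ((A + 2) ^ 2 * y 0) ≤ t := by
    refine le_ciInf fun n => ?_
    have hharnack := hz.harnack hA hy hz_nonneg (fun n => (hypos n).le) n
    have hy₀ := hypos 0
    have hyn := hypos n
    rw [← le_sub_iff_add_le', div_sub' hyn.ne', div_le_div_iff₀ (by positivity) hyn]
    linear_combination hharnack
  have hz₀ : x 0 - t * y 0 ≤ 0 := by
    have hy₀ := hypos 0
    by_contra! hpos
    have : 0 < (x 0 - t * y 0) / ((A + 2) ^ 2 * y 0) := by positivity
    linarith
  exact ⟨t, fun n => sub_eq_zero.1 <|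
    ((hz.antitone hz_nonneg n.zero_le).trans hz₀).antisymm (hz_nonneg n)⟩

theorem exists_period_multiplier (hA : ∀ n, a n ≤ A) (hx : IsTriangleSolution a x)
    (hpos : ∀ n, 0 < x n) (ha : ∀ n, N ≤ n → a (n + p) = a n) :
    ∃ μ, ∀ n, N ≤ n → x (n + p) = μ * x n := by
  have hperiod : (fun n => a (n + (N + p))) = fun n => a (n + N) :=
    funext fun n => by rw [← add_assoc, ha _ (Nat.le_add_left N n)]
  obtain ⟨μ, hμ⟩ := exists_eq_mul_of_bddBelow_div (fun n => hA (n + N))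
    (hperiod ▸ hx.shift (N + p)) (hx.shift N) (fun n => hpos _)
    ⟨0, Set.forall_mem_range.2 fun n => (div_pos (hpos _) (hpos _)).le⟩
  refine ⟨μ, fun n hn => ?_⟩
  simpa only [← add_assoc, Nat.sub_add_cancel hn] using hμ (n - N)

theorem div_mem_of_period_multiplier (hA : ∀ n, a n ≤ A) (hx : IsTriangleSolution a x)
    (hpos : ∀ n, 0 < x n) (hp : 1 ≤ p) (hμ : ∀ n, N ≤ n → x (n + p) = μ * x n) {K : Subfield ℝ}
    (hμK : μ ∈ K) (n : ℕ) : x n / x 0 ∈ K := by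
  obtain ⟨φ, hφ⟩ : ∃ φ : Dual K ℝ, φ (x 0) ≠ 0 := by
    by_contra! h
    exact (hpos 0).ne' ((forall_dual_apply_eq_zero_iff K (x 0)).1 h)
  have hφx : IsTriangleSolution a fun n => (φ (x n) : ℝ) :=
    hx.map (K.subtype.toAddMonoidHom.comp φ.toAddMonoidHom)
  have hperiod : ∀ n, N ≤ n → (φ (x (n + p)) : ℝ) / x (n + p) = φ (x n) / x n := by
    intro n hn
    have hμ₀ : μ ≠ 0 := left_ne_zero_of_mul (hμ n hn ▸ (hpos (n + p)).ne')
    have hsmul : φ (μ * x n) = ⟨μ, hμK⟩ * φ (x n) := φ.map_smul (⟨μ, hμK⟩ : K) (x n)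
    rw [hμ n hn, hsmul, Subfield.coe_mul, mul_div_mul_left _ _ hμ₀]
  obtain ⟨c, hc⟩ := hφx.exists_eq_mul_of_bddBelow_div hA hx hpos
    (finite_range_of_eventually_periodic hp hperiod).bddBelow
  have hc₀ : c ≠ 0 := left_ne_zero_of_mul (hc 0 ▸ ZeroMemClass.coe_eq_zero.not.2 hφ)
  have hratio : x n / x 0 = φ (x n) / φ (x 0) := by rw [hc, hc, mul_div_mul_left _ _ hc₀]
  exact hratio ▸ K.div_mem (φ (x n)).2 (φ (x 0)).2

end Real

end IsTriangleSolution

section Algebraic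

lemma coe_aeval_restrict {R M : Type*} [CommSemiring R] [AddCommMonoid M] [Module R M]
    {f : End R M} {V : Submodule R M} (hf : ∀ v ∈ V, f v ∈ V) (q : R[X]) (v : V) :
    (aeval (f.restrict hf) q v : M) = aeval f q v := by
  induction q using Polynomial.induction_on' with
  | add q r hq hr => simp only [map_add, LinearMap.add_apply, Submodule.coe_add, hq, hr]
  | monomial n b =>
    simp only [aeval_monomial, End.mul_apply, algebraMap_end_apply, Submodule.coe_smul,
      End.pow_restrict n hf, LinearMap.coe_restrict_apply]

variable {F L : Type*} [Field F] [Field L] [Algebra F L]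

lemma isIntegral_and_natDegree_minpoly_le_of_mul_mem {V : Submodule F L} [Module.Finite F V]
    (hV : V ≠ ⊥) {μ : L} (hμ : ∀ v ∈ V, μ * v ∈ V) :
    IsIntegral F μ ∧ (minpoly F μ).natDegree ≤ finrank F V := by
  let f : End F V := (Algebra.lmul F L μ).restrict hμ
  obtain ⟨v, hvV, hv⟩ := V.exists_mem_ne_zero_of_ne_bot hV
  have hroot : aeval μ f.charpoly = 0 := by
    have h : aeval μ f.charpoly * v = 0 :=
      calc aeval μ f.charpoly * v = aeval (Algebra.lmul F L μ) f.charpoly v := by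
            rw [aeval_algHom_apply, Algebra.coe_lmul_eq_mul, LinearMap.mul_apply']
        _ = aeval f f.charpoly ⟨v, hvV⟩ := (coe_aeval_restrict hμ f.charpoly ⟨v, hvV⟩).symm
        _ = 0 := by rw [f.aeval_self_charpoly, LinearMap.zero_apply, Submodule.coe_zero]
    exact (mul_eq_zero.1 h).resolve_right hv
  refine ⟨⟨f.charpoly, f.charpoly_monic, hroot⟩, ?_⟩
  rw [← f.charpoly_natDegree]
  exact natDegree_le_of_dvd (minpoly.dvd F μ hroot) f.charpoly_monic.ne_zero

namespace IsTriangleSolution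

variable {a : ℕ → ℕ} {x : ℕ → L}

lemma span_range_eq (hx : IsTriangleSolution a x) :
    Submodule.span F (Set.range x) = Submodule.span F (Set.range ![x 0, x 1, x 2]) := by
  refine le_antisymm (Submodule.span_le.2 ?_) (Submodule.span_mono ?_)
  · rintro _ ⟨n, rfl⟩
    refine hx.mem_of_initial_mem (Submodule.span F (Set.range ![x 0, x 1, x 2])).toAddSubgroup
      ?_ ?_ ?_ n
    exacts [Submodule.subset_span ⟨0, rfl⟩, Submodule.subset_span ⟨1, rfl⟩,
      Submodule.subset_span ⟨2, rfl⟩]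
  · rintro _ ⟨i, rfl⟩
    exact ⟨i, by fin_cases i <;> rfl⟩

theorem isIntegral_and_natDegree_minpoly_period_multiplier_le (hx : IsTriangleSolution a x)
    {N p : ℕ} (hN : x N ≠ 0) {μ : L} (hμ : ∀ n, N ≤ n → x (n + p) = μ * x n) :
    IsIntegral F μ ∧ (minpoly F μ).natDegree ≤ 3 := by
  let V := Submodule.span F (Set.range fun n => x (n + N))
  have hspan : V = Submodule.span F (Set.range ![x (0 + N), x (1 + N), x (2 + N)]) :=
    (hx.shift N).span_range_eq
  have hfinite : Module.Finite F V := by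
    rw [hspan]
    exact Module.Finite.span_of_finite F (Set.finite_range _)
  have hrank : finrank F V ≤ 3 := by
    rw [hspan]
    exact finrank_range_le_card _
  have hV : V ≠ ⊥ := by
    refine V.ne_bot_iff.2 ⟨x N, Submodule.subset_span ⟨0, ?_⟩, hN⟩
    simp only [zero_add]
  have hstable : V ≤ V.comap (LinearMap.mulLeft F μ) := by
    refine Submodule.span_le.2 ?_
    rintro _ ⟨n, rfl⟩
    refine Submodule.subset_span ⟨n + p, ?_⟩
    simp only [Nat.add_right_comm n p N, hμ _ (Nat.le_add_left N n), LinearMap.mulLeft_apply]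
  exact (isIntegral_and_natDegree_minpoly_le_of_mul_mem hV hstable).imp_right hrank.trans'

end IsTriangleSolution

lemma exists_polynomial_degree_le_finrank_of_mem {K : IntermediateField F L}
    [FiniteDimensional F K] {x : L} (hx : x ∈ K) :
    ∃ f : F[X], f ≠ 0 ∧ f.degree ≤ finrank F K ∧ aeval x f = 0 := by
  have hdegree := minpoly.natDegree_le (A := F) (⟨x, hx⟩ : K)
  rw [minpoly_eq] at hdegree
  have hint : IsIntegral F x := (IsIntegral.of_finite F (⟨x, hx⟩ : K)).map K.val
  exact ⟨minpoly F x, minpoly.ne_zero hint, degree_le_of_natDegree_le hdegree, minpoly.aeval F x⟩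

lemma eq_bot_or_eq_of_le_of_finrank_le_three {E K : IntermediateField F L} [FiniteDimensional F K]
    (hEK : E ≤ K) (hK : finrank F K ≤ 3) : E = ⊥ ∨ E = K := by
  obtain ⟨m, hm⟩ := finrank_dvd_of_le_right hEK
  have hpos : 0 < finrank F E * m := hm ▸ finrank_pos
  obtain ⟨hE₀, hm₀⟩ := CanonicallyOrderedAdd.mul_pos.1 hpos
  rcases eq_or_ne m 1 with rfl | hm₁
  · exact .inr (eq_of_le_of_finrank_eq hEK (by rw [hm, mul_one]))
  · have htwo : finrank F E * 2 ≤ finrank F K := hm ▸ Nat.mul_le_mul_left _ (by omega)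
    exact .inl (finrank_eq_one_iff.1 (by omega))

lemma mem_adjoin_or_mem_adjoin_of_finrank_le_three {K : IntermediateField F L}
    [FiniteDimensional F K] (hK : finrank F K ≤ 3) {x y : L} (hx : x ∈ K) (hy : y ∈ K) :
    x ∈ F⟮y⟯ ∨ y ∈ F⟮x⟯ := by
  rcases eq_bot_or_eq_of_le_of_finrank_le_three (adjoin_simple_le_iff.2 hx) hK with hbot | htop
  · exact .inl (bot_le (a := F⟮y⟯) (adjoin_simple_eq_bot_iff.1 hbot))
  · exact .inr (htop ▸ hy)

end Algebraic

lemma isTriangleSolution_triD {α β : ℝ} (hpos : ∀ n, 0 < triD α β n) :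
    IsTriangleSolution (triA α β) (triD α β) := by
  intro n
  have hrec : triD α β (n + 3) =
      triD α β n - triD α β (n + 1) - triA α β n * triD α β (n + 2) := by
    rw [triD, if_pos (hpos (n + 2)), triA]
  rw [hrec, nsmul_eq_mul]
  ring

/-- If (α,β) ∈ △ has a nonterminating, eventually periodic triangle sequence, then α
and β are algebraic over ℚ of degree at most three, and α ∈ ℚ(β) or β ∈ ℚ(α). -/
theorem stmt_15 (α β : ℝ) (hmem : (α, β) ∈ Tri) (hnt : ∀ k, 0 < triD α β k)
    (hper : ∃ N p : ℕ, 1 ≤ p ∧ ∀ n, N ≤ n → triA α β (n + p) = triA α β n) :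
    (∃ f : Polynomial ℚ, f ≠ 0 ∧ f.degree ≤ 3 ∧ Polynomial.aeval α f = 0) ∧
    (∃ g : Polynomial ℚ, g ≠ 0 ∧ g.degree ≤ 3 ∧ Polynomial.aeval β g = 0) ∧
    (α ∈ IntermediateField.adjoin ℚ ({β} : Set ℝ) ∨
      β ∈ IntermediateField.adjoin ℚ ({α} : Set ℝ)) := by
  obtain ⟨N, p, hp, hper⟩ := hper
  have hd := isTriangleSolution_triD hnt
  obtain ⟨A, hA⟩ := (finite_range_of_eventually_periodic hp hper).bddAbove
  replace hA : ∀ n, triA α β n ≤ A := Set.forall_mem_range.1 hA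
  obtain ⟨μ, hμ⟩ := hd.exists_period_multiplier hA hnt hper
  obtain ⟨hint, hdegree⟩ :=
    hd.isIntegral_and_natDegree_minpoly_period_multiplier_le (F := ℚ) (hnt N).ne' hμ
  have := adjoin.finiteDimensional hint
  have hrank : finrank ℚ ℚ⟮μ⟯ ≤ 3 := (adjoin.finrank hint).trans_le hdegree
  have hd_mem (n : ℕ) : triD α β n ∈ ℚ⟮μ⟯ := by
    have hdiv := hd.div_mem_of_period_multiplier hA hnt hp hμ (K := ℚ⟮μ⟯.toSubfield)
      (mem_adjoin_simple_self ℚ μ) n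
    rwa [show triD α β 0 = 1 from rfl, div_one] at hdiv
  have hpoly {x : ℝ} (hx : x ∈ ℚ⟮μ⟯) : ∃ f : ℚ[X], f ≠ 0 ∧ f.degree ≤ 3 ∧ aeval x f = 0 := by
    obtain ⟨f, hf, hle, hroot⟩ := exists_polynomial_degree_le_finrank_of_mem hx
    exact ⟨f, hf, hle.trans (mod_cast hrank), hroot⟩
  exact ⟨hpoly (hd_mem 1), hpoly (hd_mem 2),
    mem_adjoin_or_mem_adjoin_of_finrank_le_three hrank (hd_mem 1) (hd_mem 2)⟩
end
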